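/- arXiv:2604.28108 — 3 statements merged into one kernel-verified Lean document; each statement's English description precedes it below -/
import Mathlib

section
/- Let M ∈ ℝ^{n×n} be symmetric positive definite, A ∈ ℝ^{n×n}, B ∈ ℝ^{n×m}, K ∈ ℝ^{m×n}, a₁ > 0 with (A + BK)ᵀM + M(A + BK) ⪯ −a₁ M, and r̄ ≥ 0. Let e : [t₀, ∞) → ℝⁿ be differentiable with e'(t) = (A + BK) e(t) + w(t) for all t ≥ t₀, where w : [t₀, ∞) → ℝⁿ is continuous and ‖M^{1/2} w(t)‖ ≤ r̄ for all t ≥ t₀. Then for all t ≥ t₀, √(e(t)ᵀ M e(t)) ≤ e^{−(a₁/2)(t−t₀)} √(e(t₀)ᵀ M e(t₀)) + (1 − e^{−(a₁/2)(t−t₀)}) · (2 r̄ / a₁). -/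
/-!
Writing `x(t) = M^{1/2} e(t)` turns the simulation function into a Hilbert space norm, `V = ‖x‖`,
and the Lyapunov inequality together with Cauchy–Schwarz into
`⟪x, x'⟫ ≤ -(a₁ / 2) ‖x‖² + r̄ ‖x‖`. Formally this says `V' ≤ -(a₁ / 2) V + r̄`, so Grönwall's
inequality bounds `V`; since `V` need not be differentiable where it vanishes, the comparison is
made between `V²` and the square of a slightly enlarged, hence positive, Grönwall bound.
-/

open Matrix Set
open scoped MatrixOrder

/-- The Euclidean norm of a vector in `Fin k → ℝ`. -/
noncomputable def euclNorm {k : ℕ} (v : Fin k → ℝ) : ℝ :=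
  ‖(WithLp.equiv 2 (Fin k → ℝ)).symm v‖

section Gronwall

variable {δ K ε : ℝ}

theorem gronwallBound_neg {c : ℝ} (hc : c ≠ 0) (δ ε x : ℝ) :
    gronwallBound δ (-c) ε x =
      Real.exp (-c * x) * δ + (1 - Real.exp (-c * x)) * (ε / c) := by
  rw [gronwallBound_of_K_ne_0 (neg_ne_zero.mpr hc), div_neg]
  ring

theorem gronwallBound_pos {x : ℝ} (hδ : 0 < δ) (hε : 0 ≤ ε) (hx : 0 ≤ x) :
    0 < gronwallBound δ K ε x := by
  rcases lt_trichotomy K 0 with hK | rfl | hK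
  · rw [gronwallBound_of_K_ne_0 hK.ne]
    have hexp : Real.exp (K * x) ≤ 1 :=
      Real.exp_le_one_iff.mpr (mul_nonpos_of_nonpos_of_nonneg hK.le hx)
    exact add_pos_of_pos_of_nonneg (by positivity)
      (mul_nonneg_of_nonpos_of_nonpos (div_nonpos_of_nonneg_of_nonpos hε hK.le) (by linarith))
  · rw [gronwallBound_K0]
    positivity
  · exact (gronwallBound_x0 δ K ε ▸ hδ).trans_le (gronwallBound_mono hδ.le hε hK.le hx)

theorem continuous_gronwallBound_prod (K x : ℝ) :
    Continuous fun p : ℝ × ℝ => gronwallBound p.1 K p.2 x := by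
  unfold gronwallBound
  split_ifs <;> fun_prop

variable {E : Type*} [NormedAddCommGroup E] [InnerProductSpace ℝ E] {f f' : ℝ → E} {a b : ℝ}

theorem norm_le_gronwallBound_of_inner_deriv_right_lt (hδ : 0 < δ) (hε : 0 ≤ ε)
    (hf : ContinuousOn f (Icc a b)) (hf' : ∀ t ∈ Ico a b, HasDerivWithinAt f (f' t) (Ici t) t)
    (ha : ‖f a‖ ≤ δ)
    (bound : ∀ t ∈ Ico a b, f t ≠ 0 → inner ℝ (f t) (f' t) < K * ‖f t‖ ^ 2 + ε * ‖f t‖) :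
    ∀ t ∈ Icc a b, ‖f t‖ ≤ gronwallBound δ K ε (t - a) := by
  let g : ℝ → ℝ := fun t => gronwallBound δ K ε (t - a)
  have hg_pos : ∀ t, a ≤ t → 0 < g t := fun t ht => gronwallBound_pos hδ hε (sub_nonneg.mpr ht)
  have hg_sq (t : ℝ) : HasDerivAt (fun s => g s ^ 2) (2 * g t * (K * g t + ε)) t := by
    simpa using (hasDerivAt_gronwallBound_shift δ K ε t a).fun_pow 2
  have hsq : ∀ ⦃t⦄, t ∈ Icc a b → ‖f t‖ ^ 2 ≤ g t ^ 2 := by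
    refine image_le_of_deriv_right_lt_deriv_boundary' (hf.norm.pow 2)
      (fun t ht => (hf' t ht).norm_sq) ?_ (fun t _ => (hg_sq t).continuousAt.continuousWithinAt)
      (fun t _ => (hg_sq t).hasDerivWithinAt) fun t ht hcontact => ?_
    · simpa [g, gronwallBound_x0] using pow_le_pow_left₀ (norm_nonneg _) ha 2
    · have hgt := hg_pos t ht.1
      have hnorm : ‖f t‖ = g t := (sq_eq_sq₀ (norm_nonneg _) hgt.le).mp hcontact
      have hlt := bound t ht (norm_pos_iff.mp (hnorm ▸ hgt))
      rw [hnorm] at hlt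
      linarith
  exact fun t ht => le_of_sq_le_sq (hsq ht) (hg_pos t ht.1).le

theorem norm_le_gronwallBound_of_inner_deriv_right_le (hε : 0 ≤ ε)
    (hf : ContinuousOn f (Icc a b)) (hf' : ∀ t ∈ Ico a b, HasDerivWithinAt f (f' t) (Ici t) t)
    (ha : ‖f a‖ ≤ δ)
    (bound : ∀ t ∈ Ico a b, inner ℝ (f t) (f' t) ≤ K * ‖f t‖ ^ 2 + ε * ‖f t‖) :
    ∀ t ∈ Icc a b, ‖f t‖ ≤ gronwallBound δ K ε (t - a) := by
  intro t ht
  have henlarged : ∀ η ∈ Ioi (0 : ℝ), ‖f t‖ ≤ gronwallBound (δ + η) K (ε + η) (t - a) := by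
    intro η (hη : 0 < η)
    refine norm_le_gronwallBound_of_inner_deriv_right_lt
      (by linarith [norm_nonneg (f a)]) (by linarith) hf hf' (by linarith) (fun s hs hfs => ?_) t ht
    linarith [bound s hs, mul_pos hη (norm_pos_iff.mpr hfs)]
  have hlim : Filter.Tendsto (fun η => gronwallBound (δ + η) K (ε + η) (t - a))
      (nhdsWithin 0 (Ioi 0)) (nhds (gronwallBound δ K ε (t - a))) :=
    tendsto_nhdsWithin_of_tendsto_nhds <|
      ((continuous_gronwallBound_prod K (t - a)).comp (f := fun η => (δ + η, ε + η))
        (by fun_prop)).tendsto' _ _ (by simp)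
  exact ge_of_tendsto hlim (Filter.eventually_of_mem self_mem_nhdsWithin henlarged)

end Gronwall

section WeightedNorm

variable {ι : Type*} [Fintype ι] {M F : Matrix ι ι ℝ} {c r : ℝ}

theorem dotProduct_mulVec_mulVec_le_of_lyapunov (hM : M.IsSymm)
    (hLyap : (c • M - (Fᵀ * M + M * F)).PosSemidef) (x : ι → ℝ) :
    x ⬝ᵥ M *ᵥ F *ᵥ x ≤ c / 2 * (x ⬝ᵥ M *ᵥ x) := by
  have hsymm : x ⬝ᵥ (Fᵀ * M) *ᵥ x = x ⬝ᵥ (M * F) *ᵥ x := by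
    rw [dotProduct_mulVec, ← mulVec_transpose, transpose_mul, hM.eq, transpose_transpose,
      dotProduct_comm]
  have hnonneg := hLyap.dotProduct_mulVec_nonneg x
  rw [star_trivial, sub_mulVec, add_mulVec, smul_mulVec, dotProduct_sub, dotProduct_add,
    dotProduct_smul, hsymm, ← mulVec_mulVec, smul_eq_mul] at hnonneg
  linarith

variable [DecidableEq ι]

/-- The map `x ↦ M^{1/2} x` into Euclidean space, which for positive semidefinite `M` turns the form
`(x, y) ↦ x* M y` into the inner product. Its domain is `ι → 𝕜` because matrices act there; only the
codomain carries the Euclidean norm. -/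
noncomputable def sqrtMulVecCLM {𝕜 : Type*} [RCLike 𝕜] (M : Matrix ι ι 𝕜) :
    (ι → 𝕜) →L[𝕜] EuclideanSpace 𝕜 ι :=
  toEuclideanCLM (𝕜 := 𝕜) (CFC.sqrt M) ∘L (EuclideanSpace.equiv ι 𝕜).symm

open scoped ComplexOrder in
theorem inner_sqrtMulVecCLM {𝕜 : Type*} [RCLike 𝕜] {M : Matrix ι ι 𝕜} (hM : M.PosSemidef)
    (x y : ι → 𝕜) : inner 𝕜 (sqrtMulVecCLM M x) (sqrtMulVecCLM M y) = star x ⬝ᵥ M *ᵥ y := by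
  have hsqrt : (CFC.sqrt M)ᴴ = CFC.sqrt M := (CFC.sqrt_nonneg M).posSemidef.isHermitian
  calc inner 𝕜 (sqrtMulVecCLM M x) (sqrtMulVecCLM M y)
    _ = (CFC.sqrt M *ᵥ y) ⬝ᵥ star (CFC.sqrt M *ᵥ x) := rfl
    _ = star x ⬝ᵥ M *ᵥ y := by
      rw [dotProduct_comm, star_mulVec, hsqrt, ← dotProduct_mulVec, mulVec_mulVec,
        CFC.sqrt_mul_sqrt_self M hM.nonneg]

theorem norm_sqrtMulVecCLM (hM : M.PosSemidef) (x : ι → ℝ) :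
    ‖sqrtMulVecCLM M x‖ = √(x ⬝ᵥ M *ᵥ x) := by
  rw [norm_eq_sqrt_real_inner, inner_sqrtMulVecCLM hM, star_trivial]

theorem inner_sqrtMulVecCLM_le_of_lyapunov (hM : M.PosSemidef)
    (hLyap : (c • M - (Fᵀ * M + M * F)).PosSemidef) {w : ι → ℝ} (hw : ‖sqrtMulVecCLM M w‖ ≤ r)
    (x : ι → ℝ) :
    inner ℝ (sqrtMulVecCLM M x) (sqrtMulVecCLM M (F *ᵥ x + w)) ≤
      c / 2 * ‖sqrtMulVecCLM M x‖ ^ 2 + r * ‖sqrtMulVecCLM M x‖ := by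
  rw [map_add, inner_add_right]
  gcongr
  · simpa only [← real_inner_self_eq_norm_sq, inner_sqrtMulVecCLM hM, star_trivial]
      using dotProduct_mulVec_mulVec_le_of_lyapunov
        (isHermitian_iff_isSymm.mp hM.isHermitian) hLyap x
  · calc inner ℝ (sqrtMulVecCLM M x) (sqrtMulVecCLM M w)
      _ ≤ ‖sqrtMulVecCLM M x‖ * ‖sqrtMulVecCLM M w‖ := real_inner_le_norm _ _
      _ ≤ r * ‖sqrtMulVecCLM M x‖ := by rw [mul_comm]; gcongr

theorem simulation_function_comparison_general (hM : M.PosSemidef)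
    (hLyap : (c • M - (Fᵀ * M + M * F)).PosSemidef) {t₀ : ℝ} {e w : ℝ → ι → ℝ}
    (he : ContinuousOn e (Ici t₀))
    (hde : ∀ t ∈ Ici t₀, HasDerivWithinAt e (F *ᵥ e t + w t) (Ici t) t)
    (hwb : ∀ t ∈ Ici t₀, ‖sqrtMulVecCLM M (w t)‖ ≤ r) :
    ∀ t ∈ Ici t₀, √(e t ⬝ᵥ M *ᵥ e t) ≤
      gronwallBound √(e t₀ ⬝ᵥ M *ᵥ e t₀) (c / 2) r (t - t₀) := by
  intro t ht
  have hr : 0 ≤ r := (norm_nonneg _).trans (hwb t₀ self_mem_Ici)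
  simp only [← norm_sqrtMulVecCLM hM]
  exact norm_le_gronwallBound_of_inner_deriv_right_le (f := fun s => sqrtMulVecCLM M (e s)) hr
    ((sqrtMulVecCLM M).continuous.comp_continuousOn (he.mono Icc_subset_Ici_self))
    (fun s hs => (sqrtMulVecCLM M).hasFDerivAt.comp_hasDerivWithinAt s (hde s hs.1)) le_rfl
    (fun s hs => inner_sqrtMulVecCLM_le_of_lyapunov hM hLyap (hwb s hs.1) (e s)) t ⟨ht, le_rfl⟩

end WeightedNorm

/-- Simulation-function bound along perturbed closed-loop error
dynamics: if `M ≻ 0` symmetric, `(A+BK)ᵀM + M(A+BK) ⪯ −a₁M`, and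
`e'(t) = (A+BK)e(t) + w(t)` on `[t₀,∞)` with `w` continuous and
`‖M^{1/2} w(t)‖ ≤ r̄`, then for all `t ≥ t₀`,
`√(e(t)ᵀMe(t)) ≤ e^{−(a₁/2)(t−t₀)} √(e(t₀)ᵀMe(t₀)) + (1 − e^{−(a₁/2)(t−t₀)})(2r̄/a₁)`. -/
theorem simulation_function_comparison {n m : ℕ}
    (M : Matrix (Fin n) (Fin n) ℝ) (hM : M.PosDef)
    (A : Matrix (Fin n) (Fin n) ℝ) (B : Matrix (Fin n) (Fin m) ℝ)
    (K : Matrix (Fin m) (Fin n) ℝ) (a₁ : ℝ) (ha₁ : 0 < a₁)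
    (hLyap : ((-a₁) • M - ((A + B * K)ᵀ * M + M * (A + B * K))).PosSemidef)
    (r : ℝ) (hr : 0 ≤ r) (t₀ : ℝ)
    (e w : ℝ → Fin n → ℝ)
    (hde : ∀ t ∈ Ici t₀, HasDerivWithinAt e ((A + B * K).mulVec (e t) + w t) (Ici t₀) t)
    (hw : ContinuousOn w (Ici t₀))
    (hwb : ∀ t ∈ Ici t₀, euclNorm ((CFC.sqrt M).mulVec (w t)) ≤ r) :
    ∀ t ∈ Ici t₀,
      Real.sqrt (e t ⬝ᵥ M.mulVec (e t)) ≤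
        Real.exp (-(a₁ / 2) * (t - t₀)) * Real.sqrt (e t₀ ⬝ᵥ M.mulVec (e t₀)) +
          (1 - Real.exp (-(a₁ / 2) * (t - t₀))) * (2 * r / a₁) := by
  intro t ht
  have hbound := simulation_function_comparison_general hM.posSemidef hLyap
    (fun s hs => (hde s hs).continuousWithinAt)
    (fun s hs => (hde s hs).mono (Ici_subset_Ici.mpr hs)) hwb t ht
  rwa [neg_div, gronwallBound_neg (half_pos ha₁).ne', div_div_eq_mul_div, mul_comm r] at hbound
end

section
/- Consider matrices A ∈ ℝ^{n×n}, B ∈ ℝ^{n×m}, C ∈ ℝ^{p×n}, Â ∈ ℝ^{n_r×n_r}, B̂ ∈ ℝ^{n_r×m_r}, Ĉ ∈ ℝ^{p×n_r}, P ∈ ℝ^{n×n_r}, S ∈ ℝ^{n×m_r}, K ∈ ℝ^{m×n}, Q ∈ ℝ^{m×n_r}, R ∈ ℝ^{m×m_r}, a symmetric positive definite M ∈ ℝ^{n×n}, and constants a₁ > 0, ε ≥ 0, r̄_max ≥ 0. Assume: CP = Ĉ; CS = 0; CᵀC ⪯ M; (A + BK)ᵀM + M(A + BK) ⪯ −a₁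 M; and 2 r̄_max / a₁ ≤ ε. Let x : [t₀,∞) → ℝⁿ and x̂ : [t₀,∞) → ℝ^{n_r} be differentiable and û : [t₀,∞) → ℝ^{m_r} be continuously differentiable, satisfying for all t ≥ t₀: x'(t) = A x(t) + B (K e(t) + Q x̂(t) + R û(t)) with e(t) = x(t) − P x̂(t) − S û(t), x̂'(t) = Â x̂(t) + B̂ û(t), and ‖M^{1/2} ((AP − PÂ + BQ) x̂(t) + (AS + BR − PB̂) û(t) − S û'(t))‖ ≤ r̄_max. If e(t₀)ᵀ M e(t₀) ≤ ε², then ‖C x(t) − Ĉ x̂(t)‖ ≤ ε for all t ≥ t₀. -/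
open Matrix Set

/-!
The error `e = x - P xhat - S uhat` satisfies `e' = (A + B K) e + d`, where `d` is the residual of
the matching conditions. With `V = eᵀ M e`, the Lyapunov inequality gives `V' ≤ -a V + 2 eᵀ M d`,
and Young's inequality with weight `a / 2` turns this into `V' ≤ -(a / 2) (V - ε²)` as soon as
`dᵀ M d ≤ (a ε / 2)²`. By Grönwall, `V ≤ ε²` persists, and `V` dominates the squared output
mismatch `‖C e‖²`.
-/

section Derivatives

variable {𝕜 ι κ : Type*} [NontriviallyNormedField 𝕜] [Fintype ι] {s : Set 𝕜} {t : 𝕜}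

theorem hasDerivWithinAt_dotProduct {f g : 𝕜 → ι → 𝕜} {f' g' : ι → 𝕜}
    (hf : HasDerivWithinAt f f' s t) (hg : HasDerivWithinAt g g' s t) :
    HasDerivWithinAt (fun τ => f τ ⬝ᵥ g τ) (f' ⬝ᵥ g t + f t ⬝ᵥ g') s t := by
  simp only [dotProduct, ← Finset.sum_add_distrib]
  exact .fun_sum fun i _ => (hasDerivWithinAt_pi.mp hf i).mul (hasDerivWithinAt_pi.mp hg i)

theorem hasDerivWithinAt_mulVec [Finite κ] (N : Matrix κ ι 𝕜) {f : 𝕜 → ι → 𝕜} {f' : ι → 𝕜}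
    (hf : HasDerivWithinAt f f' s t) :
    HasDerivWithinAt (fun τ => N *ᵥ f τ) (N *ᵥ f') s t := by
  have := Fintype.ofFinite κ
  refine hasDerivWithinAt_pi.mpr fun i => ?_
  have hrow := hasDerivWithinAt_dotProduct (hasDerivWithinAt_const t s (N i)) hf
  rwa [zero_dotProduct, zero_add] at hrow

theorem hasDerivWithinAt_interface_error {n m nr mr : Type*}
    [Fintype n] [Fintype m] [Fintype nr] [Fintype mr]
    (A : Matrix n n 𝕜) (B : Matrix n m 𝕜) (Ahat : Matrix nr nr 𝕜) (Bhat : Matrix nr mr 𝕜)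
    (P : Matrix n nr 𝕜) (S : Matrix n mr 𝕜)
    (K : Matrix m n 𝕜) (Q : Matrix m nr 𝕜) (R : Matrix m mr 𝕜)
    {x e : 𝕜 → n → 𝕜} {xhat : 𝕜 → nr → 𝕜} {uhat : 𝕜 → mr → 𝕜} {uhat' : mr → 𝕜} (ht : t ∈ s)
    (he : ∀ τ ∈ s, e τ = x τ - P *ᵥ xhat τ - S *ᵥ uhat τ)
    (hx : HasDerivWithinAt x (A *ᵥ x t + B *ᵥ (K *ᵥ e t + Q *ᵥ xhat t + R *ᵥ uhat t)) s t)
    (hxhat : HasDerivWithinAt xhat (Ahat *ᵥ xhat t + Bhat *ᵥ uhat t) s t)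
    (huhat : HasDerivWithinAt uhat uhat' s t) :
    HasDerivWithinAt e ((A + B * K) *ᵥ e t + ((A * P - P * Ahat + B * Q) *ᵥ xhat t +
      (A * S + B * R - P * Bhat) *ᵥ uhat t - S *ᵥ uhat')) s t := by
  have hdiff := (hx.sub (hasDerivWithinAt_mulVec P hxhat)).sub (hasDerivWithinAt_mulVec S huhat)
  have hxt : x t = e t + P *ᵥ xhat t + S *ᵥ uhat t := by
    rw [he t ht]
    abel
  refine (hdiff.congr_deriv ?_).congr_of_mem he ht
  rw [hxt]
  simp only [add_mulVec, sub_mulVec, mulVec_add, ← mulVec_mulVec]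
  abel

end Derivatives

section QuadraticForm

variable {ι κ : Type*} [Fintype ι]

theorem norm_toLp_mulVec_sq [Fintype κ] (N : Matrix κ ι ℝ) (v : ι → ℝ) :
    ‖WithLp.toLp 2 (N *ᵥ v)‖ ^ 2 = v ⬝ᵥ (Nᵀ * N) *ᵥ v := by
  rw [EuclideanSpace.real_norm_sq_eq, ← mulVec_mulVec, dotProduct_transpose_mulVec]
  exact Finset.sum_congr rfl fun i _ => sq _

open scoped MatrixOrder in
theorem norm_toLp_sqrt_mulVec_sq [DecidableEq ι] {M : Matrix ι ι ℝ} (hM : M.PosSemidef)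
    (v : ι → ℝ) : ‖WithLp.toLp 2 (CFC.sqrt M *ᵥ v)‖ ^ 2 = v ⬝ᵥ M *ᵥ v := by
  have hsymm : (CFC.sqrt M)ᵀ = CFC.sqrt M := by
    simpa [IsHermitian] using (nonneg_iff_posSemidef.mp (CFC.sqrt_nonneg M)).isHermitian
  rw [norm_toLp_mulVec_sq, hsymm, CFC.sqrt_mul_sqrt_self M hM.nonneg]

theorem norm_toLp_mulVec_sq_le [Fintype κ] {M : Matrix ι ι ℝ} {N : Matrix κ ι ℝ}
    (hNM : (M - Nᵀ * N).PosSemidef) (v : ι → ℝ) :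
    ‖WithLp.toLp 2 (N *ᵥ v)‖ ^ 2 ≤ v ⬝ᵥ M *ᵥ v := by
  rw [norm_toLp_mulVec_sq, ← sub_nonneg, ← dotProduct_sub, ← sub_mulVec]
  exact hNM.dotProduct_mulVec_nonneg v

theorem dotProduct_mulVec_comm_of_isSymm {α : Type*} [CommSemiring α] {M : Matrix ι ι α}
    (hM : M.IsSymm) (v w : ι → α) : v ⬝ᵥ M *ᵥ w = w ⬝ᵥ M *ᵥ v := by
  rw [← dotProduct_transpose_mulVec, hM.eq]

theorem two_mul_dotProduct_mulVec_le {M : Matrix ι ι ℝ} (hM : M.PosSemidef) {c : ℝ} (hc : 0 < c)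
    (v w : ι → ℝ) :
    2 * (v ⬝ᵥ M *ᵥ w) ≤ c * (v ⬝ᵥ M *ᵥ v) + c⁻¹ * (w ⬝ᵥ M *ᵥ w) := by
  have hsq := hM.dotProduct_mulVec_nonneg (c • v - w)
  simp only [star_trivial, mulVec_sub, mulVec_smul, dotProduct_sub, sub_dotProduct,
    dotProduct_smul, smul_dotProduct, smul_eq_mul,
    dotProduct_mulVec_comm_of_isSymm (isHermitian_iff_isSymm.mp hM.isHermitian) w v] at hsq
  field_simp
  linarith

end QuadraticForm

section Lyapunov

variable {ι : Type*} [Fintype ι] {M F : Matrix ι ι ℝ} {a : ℝ}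

theorem lyapunov_deriv_le (hF : ((-a) • M - (Fᵀ * M + M * F)).PosSemidef) (v : ι → ℝ) :
    F *ᵥ v ⬝ᵥ M *ᵥ v + v ⬝ᵥ M *ᵥ F *ᵥ v ≤ -a * (v ⬝ᵥ M *ᵥ v) := by
  have hquad := hF.dotProduct_mulVec_nonneg v
  rw [dotProduct_comm (F *ᵥ v)]
  simpa only [star_trivial, sub_mulVec, add_mulVec, smul_mulVec, dotProduct_sub, dotProduct_add,
    dotProduct_smul, smul_eq_mul, ← mulVec_mulVec, dotProduct_transpose_mulVec, sub_nonneg]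
    using hquad

theorem lyapunov_deriv_add_disturbance_le (hM : M.PosSemidef) (ha : 0 < a)
    (hF : ((-a) • M - (Fᵀ * M + M * F)).PosSemidef) (v d : ι → ℝ) :
    (F *ᵥ v + d) ⬝ᵥ M *ᵥ v + v ⬝ᵥ M *ᵥ (F *ᵥ v + d) ≤
      -(a / 2) * (v ⬝ᵥ M *ᵥ v) + (a / 2)⁻¹ * (d ⬝ᵥ M *ᵥ d) := by
  have hdecay := lyapunov_deriv_le hF v
  have hyoung := two_mul_dotProduct_mulVec_le hM (half_pos ha) v d
  have hcomm := dotProduct_mulVec_comm_of_isSymm (isHermitian_iff_isSymm.mp hM.isHermitian) d v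
  rw [add_dotProduct, mulVec_add, dotProduct_add, hcomm]
  linarith

theorem le_of_deriv_right_le_mul_sub {V V' : ℝ → ℝ} {c b t₀ T : ℝ}
    (hV : ContinuousOn V (Icc t₀ T))
    (hV' : ∀ t ∈ Ico t₀ T, HasDerivWithinAt V (V' t) (Ici t) t)
    (hbound : ∀ t ∈ Ico t₀ T, V' t ≤ c * (V t - b)) (h₀ : V t₀ ≤ b) :
    ∀ t ∈ Icc t₀ T, V t ≤ b := by
  intro t ht
  rw [← sub_nonpos, ← gronwallBound_ε0_δ0 c (t - t₀)]
  exact le_gronwallBound_of_liminf_deriv_right_le (hV.sub continuousOn_const)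
    (fun τ hτ _ hr => ((hV' τ hτ).sub_const b).liminf_right_slope_le hr) (sub_nonpos.mpr h₀)
    (by simpa using hbound) t ht

theorem dotProduct_mulVec_le_of_disturbance_le (hM : M.PosSemidef) (ha : 0 < a)
    (hF : ((-a) • M - (Fᵀ * M + M * F)).PosSemidef) {e d : ℝ → ι → ℝ} {b t₀ : ℝ}
    (he : ∀ t ∈ Ici t₀, HasDerivWithinAt e (F *ᵥ e t + d t) (Ici t₀) t)
    (hd : ∀ t ∈ Ici t₀, d t ⬝ᵥ M *ᵥ d t ≤ (a / 2) ^ 2 * b) (h₀ : e t₀ ⬝ᵥ M *ᵥ e t₀ ≤ b) :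
    ∀ t ∈ Ici t₀, e t ⬝ᵥ M *ᵥ e t ≤ b := by
  intro t ht
  have hderiv := fun τ (hτ : τ ∈ Ici t₀) =>
    hasDerivWithinAt_dotProduct (he τ hτ) (hasDerivWithinAt_mulVec M (he τ hτ))
  refine le_of_deriv_right_le_mul_sub (c := -(a / 2))
    (fun τ hτ => (hderiv τ hτ.1).continuousWithinAt.mono Icc_subset_Ici_self)
    (fun τ hτ => (hderiv τ hτ.1).mono (Ici_subset_Ici.mpr hτ.1)) (fun τ hτ => ?_) h₀ t
    (right_mem_Icc.mpr ht)
  calc _ ≤ -(a / 2) * (e τ ⬝ᵥ M *ᵥ e τ) + (a / 2)⁻¹ * (d τ ⬝ᵥ M *ᵥ d τ) :=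
        lyapunov_deriv_add_disturbance_le hM ha hF (e τ) (d τ)
    _ ≤ -(a / 2) * (e τ ⬝ᵥ M *ᵥ e τ) + (a / 2)⁻¹ * ((a / 2) ^ 2 * b) := by
        gcongr
        exact hd τ hτ.1
    _ = -(a / 2) * (e τ ⬝ᵥ M *ᵥ e τ - b) := by
        field_simp
        ring

end Lyapunov

theorem hierarchical_output_bound_general {n m p nr mr : Type*} [Fintype n] [DecidableEq n]
    [Fintype m] [Fintype p] [Fintype nr] [Fintype mr]
    (A : Matrix n n ℝ) (B : Matrix n m ℝ) (C : Matrix p n ℝ)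
    (Ahat : Matrix nr nr ℝ) (Bhat : Matrix nr mr ℝ) (Chat : Matrix p nr ℝ)
    (P : Matrix n nr ℝ) (S : Matrix n mr ℝ)
    (K : Matrix m n ℝ) (Q : Matrix m nr ℝ) (R : Matrix m mr ℝ)
    (M : Matrix n n ℝ) (a₁ ε rmax : ℝ) (ha₁ : 0 < a₁)
    (hCP : C * P = Chat) (hCS : C * S = 0) (hCM : (M - Cᵀ * C).PosSemidef)
    (hLyap : ((-a₁) • M - ((A + B * K)ᵀ * M + M * (A + B * K))).PosSemidef)
    (hrε : 2 * rmax / a₁ ≤ ε) (t₀ : ℝ)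
    (x : ℝ → n → ℝ) (xhat : ℝ → nr → ℝ) (uhat uhat' : ℝ → mr → ℝ) (e : ℝ → n → ℝ)
    (he : ∀ t ∈ Ici t₀, e t = x t - P *ᵥ xhat t - S *ᵥ uhat t)
    (hx : ∀ t ∈ Ici t₀, HasDerivWithinAt x
      (A *ᵥ x t + B *ᵥ (K *ᵥ e t + Q *ᵥ xhat t + R *ᵥ uhat t)) (Ici t₀) t)
    (hxhat : ∀ t ∈ Ici t₀, HasDerivWithinAt xhat
      (Ahat *ᵥ xhat t + Bhat *ᵥ uhat t) (Ici t₀) t)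
    (huhat : ∀ t ∈ Ici t₀, HasDerivWithinAt uhat (uhat' t) (Ici t₀) t)
    (hres : ∀ t ∈ Ici t₀, ‖WithLp.toLp 2 ((open scoped MatrixOrder in CFC.sqrt M) *ᵥ
      ((A * P - P * Ahat + B * Q) *ᵥ xhat t + (A * S + B * R - P * Bhat) *ᵥ uhat t -
        S *ᵥ uhat' t))‖ ≤ rmax)
    (hinit : e t₀ ⬝ᵥ M *ᵥ e t₀ ≤ ε ^ 2) :
    ∀ t ∈ Ici t₀, ‖WithLp.toLp 2 (C *ᵥ x t - Chat *ᵥ xhat t)‖ ≤ ε := by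
  intro t ht
  have hM : M.PosSemidef := by simpa using hCM.add (posSemidef_conjTranspose_mul_self C)
  have hr : rmax ≤ a₁ / 2 * ε := by
    rw [div_le_iff₀ ha₁] at hrε
    linarith
  have hε : 0 ≤ ε :=
    nonneg_of_mul_nonneg_right (((norm_nonneg _).trans (hres t ht)).trans hr) (half_pos ha₁)
  have hV : e t ⬝ᵥ M *ᵥ e t ≤ ε ^ 2 :=
    dotProduct_mulVec_le_of_disturbance_le hM ha₁ hLyap
      (fun τ hτ => hasDerivWithinAt_interface_error A B Ahat Bhat P S K Q R hτ he (hx τ hτ)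
        (hxhat τ hτ) (huhat τ hτ))
      (fun τ hτ => by
        rw [← norm_toLp_sqrt_mulVec_sq hM, ← mul_pow]
        exact pow_le_pow_left₀ (norm_nonneg _) ((hres τ hτ).trans hr) 2)
      hinit t ht
  have hout : C *ᵥ x t - Chat *ᵥ xhat t = C *ᵥ e t := by
    simp [he t ht, mulVec_sub, hCP, hCS]
  rw [hout]
  exact le_of_sq_le_sq ((norm_toLp_mulVec_sq_le hCM (e t)).trans hV) hε

/-- Core quantitative content of Theorem 2: under the structural
conditions `CP = Chat`, `CS = 0`, `CᵀC ⪯ M`, the Lyapunov inequality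
`(A+BK)ᵀM + M(A+BK) ⪯ −a₁M`, and `2 r̄max / a₁ ≤ ε`, if the interconnected
dynamics hold with residual bounded by `r̄max` and the initial error satisfies
`e(t₀)ᵀ M e(t₀) ≤ ε²`, then `‖C x(t) − Chat xhat(t)‖ ≤ ε` for all `t ≥ t₀`. -/
theorem hierarchical_output_bound {n m p nr mr : ℕ}
    (A : Matrix (Fin n) (Fin n) ℝ) (B : Matrix (Fin n) (Fin m) ℝ)
    (C : Matrix (Fin p) (Fin n) ℝ)
    (Ahat : Matrix (Fin nr) (Fin nr) ℝ) (Bhat : Matrix (Fin nr) (Fin mr) ℝ)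
    (Chat : Matrix (Fin p) (Fin nr) ℝ)
    (P : Matrix (Fin n) (Fin nr) ℝ) (S : Matrix (Fin n) (Fin mr) ℝ)
    (K : Matrix (Fin m) (Fin n) ℝ) (Q : Matrix (Fin m) (Fin nr) ℝ)
    (R : Matrix (Fin m) (Fin mr) ℝ)
    (M : Matrix (Fin n) (Fin n) ℝ) (hM : M.PosDef)
    (a₁ ε rmax : ℝ) (ha₁ : 0 < a₁) (hε : 0 ≤ ε) (hrmax : 0 ≤ rmax)
    (hCP : C * P = Chat) (hCS : C * S = 0)
    (hCM : (M - Cᵀ * C).PosSemidef)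
    (hLyap : ((-a₁) • M - ((A + B * K)ᵀ * M + M * (A + B * K))).PosSemidef)
    (hrε : 2 * rmax / a₁ ≤ ε)
    (t₀ : ℝ)
    (x : ℝ → Fin n → ℝ) (xhat : ℝ → Fin nr → ℝ) (uhat uhat' : ℝ → Fin mr → ℝ)
    (e : ℝ → Fin n → ℝ)
    (he : ∀ t, e t = x t - P.mulVec (xhat t) - S.mulVec (uhat t))
    (hx : ∀ t ∈ Ici t₀, HasDerivWithinAt x
      (A.mulVec (x t) + B.mulVec (K.mulVec (e t) + Q.mulVec (xhat t) + R.mulVec (uhat t)))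
      (Ici t₀) t)
    (hxhat : ∀ t ∈ Ici t₀, HasDerivWithinAt xhat
      (Ahat.mulVec (xhat t) + Bhat.mulVec (uhat t)) (Ici t₀) t)
    (huhat : ∀ t ∈ Ici t₀, HasDerivWithinAt uhat (uhat' t) (Ici t₀) t)
    (huhat' : ContinuousOn uhat' (Ici t₀))
    (hres : ∀ t ∈ Ici t₀,
      euclNorm ((open scoped MatrixOrder in CFC.sqrt M).mulVec
        ((A * P - P * Ahat + B * Q).mulVec (xhat t) +
          (A * S + B * R - P * Bhat).mulVec (uhat t) - S.mulVec (uhat' t))) ≤ rmax)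
    (hinit : e t₀ ⬝ᵥ M.mulVec (e t₀) ≤ ε ^ 2) :
    ∀ t ∈ Ici t₀, euclNorm (C.mulVec (x t) - Chat.mulVec (xhat t)) ≤ ε :=
  hierarchical_output_bound_general A B C Ahat Bhat Chat P S K Q R M a₁ ε rmax ha₁ hCP hCS hCM
    hLyap hrε t₀ x xhat uhat uhat' e (fun t _ => he t) hx hxhat huhat hres hinit
end

section
/- Let M ∈ ℝ^{n×n} be symmetric positive definite, A ∈ ℝ^{n×n}, B ∈ ℝ^{n×m}, K ∈ ℝ^{m×n}, S ∈ ℝ^{n×m_r}, a₁ > 0 with (A + BK)ᵀM + M(A + BK) ⪯ −a₁ M, r̄ ≥ 0, ε ≥ 0 with 2r̄/a₁ ≤ ε, and t₀ < τ. Let e : [t₀, ∞) → ℝⁿ be differentiable on [t₀, τ) and on (τ, ∞) with e'(t) = (A + BK)e(t) + w(t) there, where w is continuous on these intervals and ‖M^{1/2} w(t)‖ ≤ r̄ for all t; suppose e is left-continuous at τ with left limit e(τ⁻), right-continuous with right limit e(τ⁺), and e(τ⁺) = e(τ⁻) − S δ for some δ ∈ ℝ^{m_r}. Define β(τ) = e^{−(a₁/2)(τ−t₀)}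 √(e(t₀)ᵀMe(t₀)) + (1 − e^{−(a₁/2)(τ−t₀)})·(2r̄/a₁). If √(e(t₀)ᵀMe(t₀)) ≤ ε, β(τ) ≤ ε, and δᵀ Sᵀ M S δ ≤ (ε − β(τ))², then √(e(t)ᵀMe(t)) ≤ ε for all t ≥ t₀ at which e is defined by its one-sided limits (in particular √(e(τ⁺)ᵀMe(τ⁺)) ≤ ε and √(e(t)ᵀMe(t)) ≤ ε for all t > τ). -/
open Matrix Set Filter
open scoped MatrixOrder

/-!
Write `V = √(eᵀMe)`. The Lyapunov inequality and Cauchy–Schwarz give `(V²)' ≤ -a V² + 2 r V`, so the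
square of `exp (a t / 2) V` grows at rate at most `2 (exp (a t / 2) V) (r exp (a t / 2))`, and
`exp (a t / 2) V - (2 r / a) exp (a t / 2)` is nonincreasing between jumps. Hence `V` stays below
the solution of `v' = -(a / 2) v + r`, a moving convex combination of `V(t₀)` and `2 r / a`, which
passes to the left limit at `τ`. The triangle inequality for `V` carries the bound `ε` across the
jump, and the same comparison applies again from `τ` on.
-/

open scoped Topology

section SqrtComparison

variable {D : Set ℝ} {q q' φ φ' : ℝ → ℝ}

theorem antitoneOn_sqrt_sub_of_pos (hD : Convex ℝ D)
    (hq : ContinuousOn q D) (hφ : ContinuousOn φ D)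
    (hq' : ∀ x ∈ interior D, HasDerivAt q (q' x) x)
    (hφ' : ∀ x ∈ interior D, HasDerivAt φ (φ' x) x)
    (hpos : ∀ x ∈ interior D, 0 < q x)
    (hle : ∀ x ∈ interior D, q' x ≤ 2 * φ' x * √(q x)) :
    AntitoneOn (fun x => √(q x) - φ x) D := by
  refine antitoneOn_of_hasDerivWithinAt_nonpos hD (hq.sqrt.sub hφ)
    (fun x hx => (((hq' x hx).sqrt (hpos x hx).ne').sub (hφ' x hx)).hasDerivWithinAt)
    fun x hx => ?_
  have hsqrt : 0 < √(q x) := Real.sqrt_pos.2 (hpos x hx)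
  rw [sub_nonpos, div_le_iff₀ (by positivity)]
  linarith [hle x hx]

theorem antitoneOn_sqrt_sub (hD : Convex ℝ D)
    (hq : ContinuousOn q D) (hφ : ContinuousOn φ D)
    (hq' : ∀ x ∈ interior D, HasDerivAt q (q' x) x)
    (hφ' : ∀ x ∈ interior D, HasDerivAt φ (φ' x) x)
    (hq_nonneg : ∀ x ∈ interior D, 0 ≤ q x) (hφ'_nonneg : ∀ x ∈ interior D, 0 ≤ φ' x)
    (hle : ∀ x ∈ interior D, q' x ≤ 2 * φ' x * √(q x)) :
    AntitoneOn (fun x => √(q x) - φ x) D := by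
  -- `√q` need not be differentiable at zeros of `q`, so `q` is first replaced by `q + c`.
  have shifted : ∀ c > 0, AntitoneOn (fun x => √(q x + c) - φ x) D := fun c hc =>
    antitoneOn_sqrt_sub_of_pos hD (hq.add continuousOn_const) hφ
      (fun x hx => (hq' x hx).add_const c) hφ'
      (fun x hx => add_pos_of_nonneg_of_pos (hq_nonneg x hx) hc)
      (fun x hx => (hle x hx).trans <| mul_le_mul_of_nonneg_left
        (Real.sqrt_le_sqrt (le_add_of_nonneg_right hc.le))
        (mul_nonneg zero_le_two (hφ'_nonneg x hx)))
  have limit : ∀ x, Tendsto (fun c => √(q x + c) - φ x) (𝓝[>] 0) (𝓝 (√(q x) - φ x)) := fun x => by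
    have : Continuous fun c => √(q x + c) - φ x := by fun_prop
    simpa using (this.tendsto 0).mono_left nhdsWithin_le_nhds
  exact fun s hs t ht hst => le_of_tendsto_of_tendsto (limit t) (limit s)
    (eventually_mem_nhdsWithin.mono fun c hc => shifted c hc hs ht hst)

end SqrtComparison

section ComparisonBound

/-- For `a ≠ 0`, the value at time `t` of the solution of `v' = -(a / 2) v + r`, `v(0) = v₀`;
the comparison bound `β(τ)` of the paper is the value at elapsed time `τ - t₀` for `v₀ = V(t₀)`. -/
noncomputable def comparisonBound (a r v₀ t : ℝ) : ℝ :=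
  Real.exp (-(a / 2) * t) * v₀ + (1 - Real.exp (-(a / 2) * t)) * (2 * r / a)

theorem continuous_comparisonBound (a r v₀ : ℝ) : Continuous (comparisonBound a r v₀) := by
  unfold comparisonBound
  fun_prop

theorem comparisonBound_le {a r v₀ t ε : ℝ} (ha : 0 ≤ a) (ht : 0 ≤ t) (hv₀ : v₀ ≤ ε)
    (hr : 2 * r / a ≤ ε) : comparisonBound a r v₀ t ≤ ε := by
  have hexp : Real.exp (-(a / 2) * t) ≤ 1 :=
    Real.exp_le_one_iff.2 (mul_nonpos_of_nonpos_of_nonneg (by linarith) ht)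
  exact convex_Iic (𝕜 := ℝ) ε hv₀ hr (Real.exp_pos _).le (sub_nonneg.2 hexp) (by ring)

end ComparisonBound

section EnergyNorm

variable {ι κ : Type*} [Fintype ι] [Fintype κ]

/-- The energy norm `√(vᵀMv)` of a matrix `M`, a seminorm if `M` is positive semidefinite; along an
error trajectory it is the Lyapunov-like function `V` of the paper. It is not taken from the
seminormed group structure that `M` induces on `ι → ℝ`, because that would compete with the
sup norm for which trajectories are differentiated. -/
noncomputable def energyNorm (M : Matrix ι ι ℝ) (v : ι → ℝ) : ℝ :=
  √(v ⬝ᵥ M *ᵥ v)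

theorem energyNorm_nonneg (M : Matrix ι ι ℝ) (v : ι → ℝ) : 0 ≤ energyNorm M v :=
  Real.sqrt_nonneg _

theorem continuous_energyNorm (M : Matrix ι ι ℝ) : Continuous (energyNorm M) := by
  unfold energyNorm
  fun_prop

theorem energyNorm_mulVec (M : Matrix ι ι ℝ) (S : Matrix ι κ ℝ) (v : κ → ℝ) :
    energyNorm M (S *ᵥ v) = energyNorm (Sᵀ * M * S) v := by
  simp only [energyNorm, ← mulVec_mulVec, dotProduct_mulVec v, vecMul_transpose]

variable {M : Matrix ι ι ℝ}

theorem energyNorm_mulVec_le {S : Matrix ι κ ℝ} {v : κ → ℝ} {c : ℝ} (hc : 0 ≤ c)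
    (h : v ⬝ᵥ (Sᵀ * M * S) *ᵥ v ≤ c ^ 2) : energyNorm M (S *ᵥ v) ≤ c :=
  (energyNorm_mulVec M S v).trans_le (Real.sqrt_le_iff.2 ⟨hc, h⟩)

theorem energyNorm_sq (hM : M.PosSemidef) (v : ι → ℝ) : energyNorm M v ^ 2 = v ⬝ᵥ M *ᵥ v :=
  Real.sq_sqrt (hM.dotProduct_mulVec_nonneg v)

theorem norm_toSeminormedAddCommGroup (hM : M.PosSemidef) (v : ι → ℝ) :
    (M.toSeminormedAddCommGroup hM).norm v = energyNorm M v :=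
  congrArg Real.sqrt (dotProduct_comm (M *ᵥ v) v)

theorem energyNorm_sub_le (hM : M.PosSemidef) (u v : ι → ℝ) :
    energyNorm M (u - v) ≤ energyNorm M u + energyNorm M v := by
  simp only [← norm_toSeminormedAddCommGroup hM]
  exact @norm_sub_le _ (M.toSeminormedAddCommGroup hM).toSeminormedAddGroup u v

theorem dotProduct_mulVec_le_energyNorm_mul (hM : M.PosSemidef) (u v : ι → ℝ) :
    u ⬝ᵥ M *ᵥ v ≤ energyNorm M u * energyNorm M v := by
  let := M.toSeminormedAddCommGroup hM
  let := M.toInnerProductSpace hM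
  have inner_eq : inner ℝ u v = u ⬝ᵥ M *ᵥ v := dotProduct_comm (M *ᵥ v) u
  simpa only [← norm_toSeminormedAddCommGroup hM, ← inner_eq] using real_inner_le_norm u v

theorem euclNorm_sqrt_mulVec {n : ℕ} {M : Matrix (Fin n) (Fin n) ℝ} (hM : M.PosSemidef)
    (v : Fin n → ℝ) : euclNorm (CFC.sqrt M *ᵥ v) = energyNorm M v := by
  have hsymm : (CFC.sqrt M)ᵀ = CFC.sqrt M := (CFC.sqrt_nonneg M).posSemidef.isHermitian.eq
  have hmul : (CFC.sqrt M)ᵀ * 1 * CFC.sqrt M = M := by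
    rw [hsymm, mul_one, CFC.sqrt_mul_sqrt_self M hM.nonneg]
  calc euclNorm (CFC.sqrt M *ᵥ v) = energyNorm 1 (CFC.sqrt M *ᵥ v) := by
        simp [euclNorm, energyNorm, EuclideanSpace.norm_eq, dotProduct, sq]
    _ = energyNorm M v := by rw [energyNorm_mulVec, hmul]

end EnergyNorm

section PerturbedFlow

variable {ι : Type*} [Fintype ι] {M L : Matrix ι ι ℝ} {a r : ℝ}

theorem hasDerivAt_dotProduct_mulVec_self (M : Matrix ι ι ℝ) {e : ℝ → ι → ℝ} {v : ι → ℝ} {t : ℝ}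
    (he : HasDerivAt e v t) :
    HasDerivAt (fun x => e x ⬝ᵥ M *ᵥ e x) (v ⬝ᵥ M *ᵥ e t + e t ⬝ᵥ M *ᵥ v) t := by
  have hMe : HasDerivAt (fun x => M *ᵥ e x) (M *ᵥ v) t :=
    (LinearMap.toContinuousLinearMap M.mulVecLin).hasFDerivAt.comp_hasDerivAt t he
  simpa only [dotProduct, Finset.sum_add_distrib] using
    HasDerivAt.fun_sum fun i (_ : i ∈ Finset.univ) =>
      (hasDerivAt_pi.1 he i).fun_mul (hasDerivAt_pi.1 hMe i)

theorem lyapunov_derivative_le (hM : M.PosSemidef)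
    (hLyap : ((-a) • M - (Lᵀ * M + M * L)).PosSemidef) (u w : ι → ℝ) :
    (L *ᵥ u + w) ⬝ᵥ M *ᵥ u + u ⬝ᵥ M *ᵥ (L *ᵥ u + w) ≤
      -a * energyNorm M u ^ 2 + 2 * energyNorm M w * energyNorm M u := by
  have drift : L *ᵥ u ⬝ᵥ M *ᵥ u + u ⬝ᵥ M *ᵥ L *ᵥ u ≤ -a * energyNorm M u ^ 2 := by
    have := hLyap.dotProduct_mulVec_nonneg u
    simp only [star_trivial, sub_mulVec, add_mulVec, smul_mulVec, dotProduct_sub, dotProduct_add,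
      dotProduct_smul, ← mulVec_mulVec, dotProduct_mulVec u Lᵀ, vecMul_transpose,
      smul_eq_mul] at this
    rw [energyNorm_sq hM]
    linarith
  have perturbation_left := dotProduct_mulVec_le_energyNorm_mul hM w u
  have perturbation_right := dotProduct_mulVec_le_energyNorm_mul hM u w
  rw [add_dotProduct, mulVec_add, dotProduct_add]
  linarith

variable {D : Set ℝ} {e w : ℝ → ι → ℝ}

theorem antitoneOn_exp_mul_energyNorm_sub (hM : M.PosSemidef) (ha : a ≠ 0)
    (hLyap : ((-a) • M - (Lᵀ * M + M * L)).PosSemidef) (hD : Convex ℝ D)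
    (he : ContinuousOn e D) (hde : ∀ t ∈ interior D, HasDerivAt e (L *ᵥ e t + w t) t)
    (hw : ∀ t ∈ interior D, energyNorm M (w t) ≤ r) :
    AntitoneOn (fun t => Real.exp (a / 2 * t) * energyNorm M (e t) -
      Real.exp (a / 2 * t) * (2 * r / a)) D := by
  have exp_sq (t : ℝ) : Real.exp (a * t) = Real.exp (a / 2 * t) ^ 2 := by
    rw [← Real.exp_nat_mul]; congr 1; push_cast; ring
  have hsqrt (t : ℝ) : √(Real.exp (a * t) * (e t ⬝ᵥ M *ᵥ e t)) =
      Real.exp (a / 2 * t) * energyNorm M (e t) := by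
    rw [exp_sq, Real.sqrt_mul (sq_nonneg _), Real.sqrt_sq (Real.exp_pos _).le, energyNorm]
  have hexp (c t : ℝ) : HasDerivAt (fun x => Real.exp (c * x)) (Real.exp (c * t) * c) t := by
    simpa using ((hasDerivAt_id t).const_mul c).exp
  simp only [← hsqrt]
  refine antitoneOn_sqrt_sub hD (by fun_prop) (by fun_prop)
    (fun t ht => (hexp a t).mul (hasDerivAt_dotProduct_mulVec_self M (hde t ht)))
    (φ' := fun t => r * Real.exp (a / 2 * t))
    (fun t _ => ((hexp (a / 2) t).mul_const (2 * r / a)).congr_deriv (by field_simp))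
    (fun t _ => mul_nonneg (Real.exp_pos _).le (hM.dotProduct_mulVec_nonneg (e t)))
    (fun t ht => mul_nonneg ((energyNorm_nonneg M (w t)).trans (hw t ht)) (Real.exp_pos _).le)
    (fun t ht => ?_)
  have hV := lyapunov_derivative_le hM hLyap (e t) (w t)
  have hwV := mul_le_mul_of_nonneg_right (hw t ht) (energyNorm_nonneg M (e t))
  rw [hsqrt, ← energyNorm_sq hM]
  calc _ = Real.exp (a * t) * (a * energyNorm M (e t) ^ 2 +
        ((L *ᵥ e t + w t) ⬝ᵥ M *ᵥ e t + e t ⬝ᵥ M *ᵥ (L *ᵥ e t + w t))) := by ring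
    _ ≤ Real.exp (a * t) * (2 * (r * energyNorm M (e t))) := by gcongr; linarith
    _ = _ := by rw [exp_sq]; ring

theorem energyNorm_le_comparisonBound (hM : M.PosSemidef) (ha : a ≠ 0)
    (hLyap : ((-a) • M - (Lᵀ * M + M * L)).PosSemidef) (hD : Convex ℝ D)
    (he : ContinuousOn e D) (hde : ∀ t ∈ interior D, HasDerivAt e (L *ᵥ e t + w t) t)
    (hw : ∀ t ∈ interior D, energyNorm M (w t) ≤ r)
    {s t : ℝ} (hs : s ∈ D) (ht : t ∈ D) (hst : s ≤ t) :
    energyNorm M (e t) ≤ comparisonBound a r (energyNorm M (e s)) (t - s) := by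
  have hanti := antitoneOn_exp_mul_energyNorm_sub hM ha hLyap hD he hde hw hs ht hst
  have hexp : Real.exp (a / 2 * s) = Real.exp (a / 2 * t) * Real.exp (-(a / 2) * (t - s)) := by
    rw [← Real.exp_add]; congr 1; ring
  refine le_of_mul_le_mul_left ?_ (Real.exp_pos (a / 2 * t))
  rw [comparisonBound]
  simp only [hexp] at hanti
  linarith

end PerturbedFlow

theorem jump_invariance_general {ι : Type*} [Fintype ι] {M L : Matrix ι ι ℝ} (hM : M.PosSemidef)
    {a r ε : ℝ} (ha : 0 < a) (hLyap : ((-a) • M - (Lᵀ * M + M * L)).PosSemidef)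
    (hrε : 2 * r / a ≤ ε) {t₀ τ : ℝ} (hτ : t₀ < τ) {e w : ℝ → ι → ℝ} {d eL : ι → ℝ}
    (hde₁ : ∀ t ∈ Ico t₀ τ, HasDerivWithinAt e (L *ᵥ e t + w t) (Ico t₀ τ) t)
    (hde₂ : ∀ t ∈ Ioi τ, HasDerivAt e (L *ᵥ e t + w t) t)
    (hw : ∀ t ∈ Ici t₀, energyNorm M (w t) ≤ r)
    (hleft : Tendsto e (𝓝[<] τ) (𝓝 eL)) (hright : ContinuousWithinAt e (Ioi τ) τ)
    (hjump : e τ = eL - d)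
    {β : ℝ} (hβ : comparisonBound a r (energyNorm M (e t₀)) (τ - t₀) ≤ β)
    (hV₀ : energyNorm M (e t₀) ≤ ε) (hd : energyNorm M d ≤ ε - β) :
    ∀ t ∈ Ici t₀, energyNorm M (e t) ≤ ε := by
  have before : ∀ t ∈ Ico t₀ τ,
      energyNorm M (e t) ≤ comparisonBound a r (energyNorm M (e t₀)) (t - t₀) := fun t ht => by
    refine energyNorm_le_comparisonBound (w := w) hM ha.ne' hLyap (convex_Ico t₀ τ)
      (HasDerivWithinAt.continuousOn hde₁) ?_ ?_ (left_mem_Ico.2 hτ) ht ht.1 <;>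
      rw [interior_Ico]
    · exact fun x hx => (hde₁ x (Ioo_subset_Ico_self hx)).hasDerivAt (Ico_mem_nhds hx.1 hx.2)
    · exact fun x hx => hw x hx.1.le
  have left_limit : energyNorm M eL ≤ β := by
    have hbound : Continuous fun t => comparisonBound a r (energyNorm M (e t₀)) (t - t₀) :=
      (continuous_comparisonBound _ _ _).comp (continuous_id.sub continuous_const)
    exact (le_of_tendsto_of_tendsto (((continuous_energyNorm M).tendsto eL).comp hleft)
      ((hbound.tendsto τ).mono_left nhdsWithin_le_nhds)
      (mem_of_superset (Ico_mem_nhdsLT hτ) before)).trans hβ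
  have after_jump : energyNorm M (e τ) ≤ ε := by
    rw [hjump]
    linarith [energyNorm_sub_le hM eL d]
  have continuousOn_after : ContinuousOn e (Ici τ) := fun x (hx : τ ≤ x) => by
    rcases hx.eq_or_lt with rfl | hlt
    · exact continuousWithinAt_Ioi_iff_Ici.1 hright
    · exact (hde₂ x hlt).continuousAt.continuousWithinAt
  intro t ht
  rcases lt_or_ge t τ with h | h
  · exact (before t ⟨ht, h⟩).trans (comparisonBound_le ha.le (sub_nonneg.2 ht) hV₀ hrε)
  · refine (energyNorm_le_comparisonBound hM ha.ne' hLyap (convex_Ici τ) continuousOn_after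
      (by rwa [interior_Ici]) ?_ self_mem_Ici h h).trans
      (comparisonBound_le ha.le (sub_nonneg.2 h) after_jump hrε)
    rw [interior_Ici]
    exact fun x hx => hw x (hτ.le.trans (le_of_lt hx))

/-- Corollary 1 (jump case): the error trajectory `e` obeys the
perturbed closed-loop dynamics on `[t₀, τ)` and on `(τ, ∞)`, has a left limit `eL`
at the jump time `τ`, is right-continuous at `τ`, and jumps by `−Sδ`, i.e.
`e(τ⁺) = e(τ⁻) − Sδ`. If `V(t₀) = √(e(t₀)ᵀMe(t₀)) ≤ ε`, the comparison bound
`β(τ) ≤ ε`, and the jump satisfies `δᵀSᵀMSδ ≤ (ε − β(τ))²`, then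
`√(e(t)ᵀMe(t)) ≤ ε` for all `t ≥ t₀` (at `t = τ` the value of `e` is its right
limit `e(τ⁺)`, so in particular `√(e(τ⁺)ᵀMe(τ⁺)) ≤ ε` and the bound holds for all
`t > τ`). -/
theorem jump_invariance {n m mr : ℕ}
    (M : Matrix (Fin n) (Fin n) ℝ) (hM : M.PosDef)
    (A : Matrix (Fin n) (Fin n) ℝ) (B : Matrix (Fin n) (Fin m) ℝ)
    (K : Matrix (Fin m) (Fin n) ℝ) (S : Matrix (Fin n) (Fin mr) ℝ)
    (a₁ r ε : ℝ) (ha₁ : 0 < a₁) (hr : 0 ≤ r) (hε : 0 ≤ ε)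
    (hLyap : ((-a₁) • M - ((A + B * K)ᵀ * M + M * (A + B * K))).PosSemidef)
    (hrε : 2 * r / a₁ ≤ ε)
    (t₀ τ : ℝ) (hτ : t₀ < τ)
    (e w : ℝ → Fin n → ℝ) (δ : Fin mr → ℝ) (eL : Fin n → ℝ)
    -- perturbed closed-loop dynamics on `[t₀, τ)` and on `(τ, ∞)`
    (hde₁ : ∀ t ∈ Ico t₀ τ,
      HasDerivWithinAt e ((A + B * K).mulVec (e t) + w t) (Ico t₀ τ) t)
    (hde₂ : ∀ t ∈ Ioi τ, HasDerivAt e ((A + B * K).mulVec (e t) + w t) t)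
    (hw₁ : ContinuousOn w (Ico t₀ τ)) (hw₂ : ContinuousOn w (Ioi τ))
    (hwb : ∀ t, euclNorm ((CFC.sqrt M).mulVec (w t)) ≤ r)
    -- left limit `e(τ⁻) = eL`, right-continuity (`e τ` is the right limit `e(τ⁺)`),
    -- and jump `e(τ⁺) = e(τ⁻) − Sδ`
    (hleft : Tendsto e (nhdsWithin τ (Iio τ)) (nhds eL))
    (hright : ContinuousWithinAt e (Ioi τ) τ)
    (hjump : e τ = eL - S.mulVec δ)
    -- comparison bound at the jump time
    (β : ℝ)
    (hβ : β = Real.exp (-(a₁ / 2) * (τ - t₀)) * Real.sqrt (e t₀ ⬝ᵥ M.mulVec (e t₀)) +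
      (1 - Real.exp (-(a₁ / 2) * (τ - t₀))) * (2 * r / a₁))
    (hV₀ : Real.sqrt (e t₀ ⬝ᵥ M.mulVec (e t₀)) ≤ ε)
    (hβε : β ≤ ε)
    (hδ : δ ⬝ᵥ (Sᵀ * M * S).mulVec δ ≤ (ε - β) ^ 2) :
    ∀ t ∈ Ici t₀, Real.sqrt (e t ⬝ᵥ M.mulVec (e t)) ≤ ε := by
  exact jump_invariance_general hM.posSemidef ha₁ hLyap hrε hτ hde₁ hde₂
    (fun t _ => (euclNorm_sqrt_mulVec hM.posSemidef (w t)).ge.trans (hwb t)) hleft hright hjump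
    hβ.ge hV₀ (energyNorm_mulVec_le (sub_nonneg.2 hβε) hδ)
end
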